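/- If h' is a Lie subalgebra of su(1,k) (k ≥ 2) satisfying [h_α, h'] ⊆ h' and h' ∩ h_{-α} ≠ 0, then h' = su(1,k). -/

import Mathlib

/-!
Everything rests on the formula `[[U(u), Y(v)], Y(v)] = Y(2⟨u, v⟩ v - |v|² u)`, where
`⟨u, v⟩ = ∑ ū_i v_i` (`lie_lie_Yneg`). For fixed `v ≠ 0` the real-linear map
`u ↦ 2⟨u, v⟩ v - |v|² u` is bijective on `ℂ^{k-1}`: it acts by `-|v|²` on the complex orthogonal
complement of `v`, by `|v|²` on `ℝ v` and by `-3|v|²` on `ℝ i v`. Hence a single nonzero element of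
`h_{-α}` in `h'` forces `h_{-α} ⊆ h'` (`Yneg_mem_of_ne_zero`).

The brackets `[U(u), Y(v)]` then span `a ⊕ m` (`lie_Upos_Yneg`, `diagBlock_decomp`). Since
`diag(-1, 0, 1) ∈ a` acts on `h_α` by a nonzero scalar and `[h_α, h'] ⊆ h'`, also `h_α ⊆ h'`.
The one-dimensional spaces `h_{±2α}` are brackets of elements of `h_{±α}`, and `su(1,k)` is the sum
of the five pieces.
-/

open Matrix

/-- Index set for blocks of sizes `1, k-1, 1` (here `m = k-1`, `k ≥ 2`). -/
abbrev Idx (m : ℕ) := Fin 1 ⊕ Fin m ⊕ Fin 1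

/-- The antidiagonal-type hermitian form matrix `J_{1,k}` (complex coefficients). -/
def herJ (m : ℕ) : Matrix (Idx m) (Idx m) ℂ := fun i j =>
  match i, j with
  | Sum.inl _, Sum.inr (Sum.inr _) => 1
  | Sum.inr (Sum.inr _), Sum.inl _ => 1
  | Sum.inr (Sum.inl i), Sum.inr (Sum.inl j) => if i = j then 1 else 0
  | _, _ => 0

/-- Element of the negative root space `h_{-α}` of `su(1,k)`, parametrized by
`v ∈ ℂ^{k-1}`: the matrix `((0,0,0), (-v̄ᵀ,0,0), (0,v,0))`. -/
def Yneg (m : ℕ) (v : Fin m → ℂ) : Matrix (Idx m) (Idx m) ℂ := fun i j =>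
  match i, j with
  | Sum.inr (Sum.inl i), Sum.inl _ => -(starRingEnd ℂ) (v i)
  | Sum.inr (Sum.inr _), Sum.inr (Sum.inl j) => v j
  | _, _ => 0

/-- Element of the positive root space `h_α` of `su(1,k)`, parametrized by `u ∈ ℂ^{k-1}`:
the matrix `((0,u,0), (0,0,-ūᵀ), (0,0,0))`. -/
def Upos (m : ℕ) (u : Fin m → ℂ) : Matrix (Idx m) (Idx m) ℂ := fun i j =>
  match i, j with
  | Sum.inl _, Sum.inr (Sum.inl j) => u j
  | Sum.inr (Sum.inl i), Sum.inr (Sum.inr _) => -(starRingEnd ℂ) (u i)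
  | _, _ => 0


/-- The block-diagonal matrix `diag(z, A, -z̄)`; those in `su(1,k)` form `a ⊕ m`. -/
def diagBlock (m : ℕ) (z : ℂ) (A : Matrix (Fin m) (Fin m) ℂ) :
    Matrix (Idx m) (Idx m) ℂ := fun i j =>
  match i, j with
  | Sum.inl _, Sum.inl _ => z
  | Sum.inr (Sum.inl i), Sum.inr (Sum.inl j) => A i j
  | Sum.inr (Sum.inr _), Sum.inr (Sum.inr _) => -(starRingEnd ℂ) z
  | _, _ => 0

/-- The matrix with single entry `c` in the upper right corner; it lies in `h_{2α}` when `c` is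
purely imaginary. -/
def cornerPos (m : ℕ) (c : ℂ) : Matrix (Idx m) (Idx m) ℂ := fun i j =>
  match i, j with
  | Sum.inl _, Sum.inr (Sum.inr _) => c
  | _, _ => 0

/-- The matrix with single entry `c` in the lower left corner; it lies in `h_{-2α}` when `c` is
purely imaginary. -/
def cornerNeg (m : ℕ) (c : ℂ) : Matrix (Idx m) (Idx m) ℂ := fun i j =>
  match i, j with
  | Sum.inr (Sum.inr _), Sum.inl _ => c
  | _, _ => 0

lemma lie_Upos_Yneg (m : ℕ) (u v : Fin m → ℂ) :
    ⁅Upos m u, Yneg m v⁆ = diagBlock m (-∑ i, u i * (starRingEnd ℂ) (v i))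
      (Matrix.of fun i j => (starRingEnd ℂ) (v i) * u j - (starRingEnd ℂ) (u i) * v j) := by
  ext i j
  rcases i with i | i | i <;> rcases j with j | j | j <;>
    simp [Ring.lie_def, Matrix.mul_apply, Fintype.sum_sum_type, Upos, Yneg, diagBlock]
  · ring
  · exact Finset.sum_congr rfl fun x _ => mul_comm _ _

lemma lie_diagBlock_Yneg (m : ℕ) (z : ℂ) (A : Matrix (Fin m) (Fin m) ℂ)
    (hA : ∀ i j, (starRingEnd ℂ) (A i j) = -A j i) (v : Fin m → ℂ) :
    ⁅diagBlock m z A, Yneg m v⁆ =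
      Yneg m (fun j => -(starRingEnd ℂ) z * v j - ∑ i, v i * A i j) := by
  ext i j
  rcases i with i | i | i <;> rcases j with j | j | j <;>
    simp [Ring.lie_def, Matrix.mul_apply, Fintype.sum_sum_type, Yneg, diagBlock, hA]
  simp only [mul_comm (A i _)]
  ring

lemma lie_lie_Yneg (m : ℕ) (u v : Fin m → ℂ) :
    ⁅⁅Upos m u, Yneg m v⁆, Yneg m v⁆ =
      Yneg m (fun j => 2 * (∑ i, (starRingEnd ℂ) (u i) * v i) * v j
        - (∑ i, v i * (starRingEnd ℂ) (v i)) * u j) := by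
  rw [lie_Upos_Yneg, lie_diagBlock_Yneg]
  · congr 1
    ext j
    simp only [Matrix.of_apply]
    have h : ∑ i, v i * ((starRingEnd ℂ) (v i) * u j - (starRingEnd ℂ) (u i) * v j)
        = (∑ i, v i * (starRingEnd ℂ) (v i)) * u j
          - (∑ i, (starRingEnd ℂ) (u i) * v i) * v j := by
      rw [Finset.sum_mul, Finset.sum_mul, ← Finset.sum_sub_distrib]
      exact Finset.sum_congr rfl fun i _ => by ring
    rw [h]
    simp only [map_neg, map_sum, map_mul, Complex.conj_conj]
    ring
  · intro i j
    simp only [Matrix.of_apply, map_sub, map_mul, Complex.conj_conj]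
    ring

lemma lie_Upos_diagBlock (m : ℕ) (u : Fin m → ℂ) :
    ⁅Upos m u, diagBlock m (-1) 0⁆ = Upos m u := by
  ext i j
  rcases i with i | i | i <;> rcases j with j | j | j <;>
    simp [Ring.lie_def, Matrix.mul_apply, Fintype.sum_sum_type, Upos, diagBlock]

lemma lie_Upos_Upos (m : ℕ) (u w : Fin m → ℂ) :
    ⁅Upos m u, Upos m w⁆ = cornerPos m
      (∑ i, w i * (starRingEnd ℂ) (u i) - ∑ i, u i * (starRingEnd ℂ) (w i)) := by
  ext i j
  rcases i with i | i | i <;> rcases j with j | j | j <;>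
    simp [Ring.lie_def, Matrix.mul_apply, Fintype.sum_sum_type, Upos, cornerPos]
  ring

lemma lie_Yneg_Yneg (m : ℕ) (u w : Fin m → ℂ) :
    ⁅Yneg m u, Yneg m w⁆ = cornerNeg m
      (∑ i, w i * (starRingEnd ℂ) (u i) - ∑ i, u i * (starRingEnd ℂ) (w i)) := by
  ext i j
  rcases i with i | i | i <;> rcases j with j | j | j <;>
    simp [Ring.lie_def, Matrix.mul_apply, Fintype.sum_sum_type, Yneg, cornerNeg]
  ring

/-- Surjectivity of `u ↦ 2⟨u, v⟩ v - |v|² u` for `v ≠ 0`. -/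
lemma exists_preimage (m : ℕ) (v : Fin m → ℂ) (hv : v ≠ 0) (w : Fin m → ℂ) :
    ∃ u : Fin m → ℂ, (fun j => 2 * (∑ i, (starRingEnd ℂ) (u i) * v i) * v j
        - (∑ i, v i * (starRingEnd ℂ) (v i)) * u j) = w := by
  set N : ℂ := ∑ i, v i * (starRingEnd ℂ) (v i) with hN
  have hN0 : N ≠ 0 := by
    intro h
    apply hv
    open scoped ComplexOrder in exact dotProduct_self_star_eq_zero.mp h
  have hNc : (starRingEnd ℂ) N = N := by
    simp only [hN, map_sum, map_mul, Complex.conj_conj]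
    exact Finset.sum_congr rfl fun i _ => mul_comm _ _
  set p : ℂ := ∑ i, w i * (starRingEnd ℂ) (v i) with hp
  have hpc : ∑ i, (starRingEnd ℂ) (w i) * v i = (starRingEnd ℂ) p := by
    simp [hp]
  -- A solution has `⟨u, v⟩ = c`: pairing the equation with `v` gives `2 c - c̄ = p / N`.
  set c : ℂ := (2 * (p / N) + (starRingEnd ℂ) p / N) / 3 with hc
  have hcc : (starRingEnd ℂ) c = (2 * ((starRingEnd ℂ) p / N) + p / N) / 3 := by
    simp [hc, hNc, Complex.conj_ofNat]
  refine ⟨fun j => (2 * c * v j - w j) / N, ?_⟩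
  have hs : ∑ i, (starRingEnd ℂ) ((2 * c * v i - w i) / N) * v i = c := by
    have : ∀ i, (starRingEnd ℂ) ((2 * c * v i - w i) / N) * v i
        = (2 * (starRingEnd ℂ) c / N) * (v i * (starRingEnd ℂ) (v i))
          - (1 / N) * ((starRingEnd ℂ) (w i) * v i) := by
      intro i
      simp only [map_div₀, map_sub, map_mul, hNc, Complex.conj_ofNat]
      ring
    simp only [this]
    rw [Finset.sum_sub_distrib, ← Finset.mul_sum, ← Finset.mul_sum, ← hN, hpc, hcc, hc]
    field_simp
    ring
  rw [hs]
  ext j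
  field_simp
  ring

/-- Under the action of `h_α`, one nonzero element of `h_{-α}` generates all of `h_{-α}`. -/
lemma Yneg_mem_of_ne_zero (m : ℕ) (h' : Submodule ℝ (Matrix (Idx m) (Idx m) ℂ))
    (hbr : ∀ M ∈ h', ∀ M' ∈ h', ⁅M, M'⁆ ∈ h')
    (hstab : ∀ u : Fin m → ℂ, ∀ M ∈ h', ⁅Upos m u, M⁆ ∈ h')
    (v : Fin m → ℂ) (hv : v ≠ 0) (hY : Yneg m v ∈ h') (w : Fin m → ℂ) : Yneg m w ∈ h' := by
  obtain ⟨u, rfl⟩ := exists_preimage m v hv w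
  rw [← lie_lie_Yneg]
  exact hbr _ (hstab u _ hY) _ hY

lemma lie_Upos_Yneg_single (m : ℕ) (i j : Fin m) (a : ℂ) :
    ⁅Upos m (Pi.single j a), Yneg m (Pi.single i 1)⁆ =
      diagBlock m (if i = j then -a else 0)
        (Matrix.single i j a - Matrix.single j i ((starRingEnd ℂ) a)) := by
  rw [lie_Upos_Yneg]
  congr 1
  · by_cases h : i = j <;> simp [Pi.single_apply, h]
  · ext k l
    simp only [Matrix.of_apply, Matrix.sub_apply, Matrix.single_apply, Pi.single_apply]
    by_cases h1 : k = i <;> by_cases h2 : l = j <;> by_cases h3 : k = j <;> by_cases h4 : l = i <;>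
      simp [h1, h2, h3, h4, eq_comm] <;> grind

/-- A skew-hermitian `A` is the sum over `(i, j)` of the middle blocks of
`[U(A_ij e_j / 2), Y(e_i)]`, and the upper left entries of these brackets add up to `-tr A / 2`. -/
lemma diagBlock_decomp (m : ℕ) (x : ℝ) (A : Matrix (Fin m) (Fin m) ℂ)
    (hA : ∀ i j, (starRingEnd ℂ) (A i j) = -A j i) :
    diagBlock m (x - A.trace / 2) A = diagBlock m x 0 +
      ∑ i, ∑ j, ⁅Upos m (Pi.single j (A i j / 2)), Yneg m (Pi.single i 1)⁆ := by
  ext a b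
  simp only [lie_Upos_Yneg_single, Matrix.add_apply, Matrix.sum_apply]
  rcases a with a | a | a <;> rcases b with b | b | b <;>
    simp [diagBlock, Matrix.trace, hA, Finset.sum_div, Complex.conj_ofNat, apply_ite]
  · ring
  · simp only [Matrix.single_apply, ite_and, Finset.sum_ite_eq',
      Finset.mem_univ, if_true]
    rw [Finset.sum_comm]
    simp only [Finset.sum_ite_eq', Finset.mem_univ, if_true]
    ring
  · ring

/-- If `h'` is a (real) Lie subalgebra of `su(1,k)` (`k = m+1 ≥ 2`) with
`[h_α, h'] ⊆ h'` and `h' ∩ h_{-α} ≠ 0`, then `h' = su(1,k)`. -/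
theorem subalgebra_meeting_hneg_is_full_su (m : ℕ) (hm : 1 ≤ m)
    (h' : Submodule ℝ (Matrix (Idx m) (Idx m) ℂ))
    (hsub : ∀ M ∈ h', Matrix.trace M = 0 ∧ Mᴴ * herJ m + herJ m * M = 0)
    (hbr : ∀ M ∈ h', ∀ M' ∈ h', ⁅M, M'⁆ ∈ h')
    (hstab : ∀ u : Fin m → ℂ, ∀ M ∈ h', ⁅Upos m u, M⁆ ∈ h')
    (hmeet : ∃ v : Fin m → ℂ, v ≠ 0 ∧ Yneg m v ∈ h') :
    ∀ M : Matrix (Idx m) (Idx m) ℂ,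
      Matrix.trace M = 0 → Mᴴ * herJ m + herJ m * M = 0 → M ∈ h' := by
  obtain ⟨v, hv, hY⟩ := hmeet
  have hneg := Yneg_mem_of_ne_zero m h' hbr hstab v hv hY
  let o : Fin m := ⟨0, hm⟩
  have ha : ∀ x : ℝ, diagBlock m x 0 ∈ h' := by
    intro x
    have h := hstab (Pi.single o (-x : ℂ)) _ (hneg (Pi.single o 1))
    rw [lie_Upos_Yneg_single] at h
    simpa using h
  have hpos : ∀ u, Upos m u ∈ h' := by
    intro u
    rw [← lie_Upos_diagBlock]
    have h := ha (-1)
    push_cast at h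
    exact hstab u _ h
  have hcp : ∀ c : ℂ, (starRingEnd ℂ) c = -c → cornerPos m c ∈ h' := by
    intro c hc
    have h := hbr _ (hpos (Pi.single o (-c / 2))) _ (hpos (Pi.single o 1))
    rw [lie_Upos_Upos] at h
    convert h using 2
    simp [Pi.single_apply, hc, apply_ite, Complex.conj_ofNat]
    ring
  have hcn : ∀ c : ℂ, (starRingEnd ℂ) c = -c → cornerNeg m c ∈ h' := by
    intro c hc
    have h := hbr _ (hneg (Pi.single o (-c / 2))) _ (hneg (Pi.single o 1))
    rw [lie_Yneg_Yneg] at h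
    convert h using 2
    simp [Pi.single_apply, hc, apply_ite, Complex.conj_ofNat]
    ring
  have hdiag : ∀ (x : ℝ) (A : Matrix (Fin m) (Fin m) ℂ),
      (∀ i j, (starRingEnd ℂ) (A i j) = -A j i) → diagBlock m (x - A.trace / 2) A ∈ h' := by
    intro x A hA
    rw [diagBlock_decomp m x A hA]
    exact h'.add_mem (ha x) (h'.sum_mem fun i _ => h'.sum_mem fun j _ => hstab _ _ (hneg _))
  intro M htr hJ
  have e : ∀ i j, (Mᴴ * herJ m + herJ m * M) i j = 0 := fun i j => by rw [hJ]; rfl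
  let A : Matrix (Fin m) (Fin m) ℂ := fun i j => M (.inr (.inl i)) (.inr (.inl j))
  have e00 := e (.inl 0) (.inl 0)
  have e01 := fun j => e (.inl 0) (.inr (.inl j))
  have e02 := e (.inl 0) (.inr (.inr 0))
  have e11 := fun i j => e (.inr (.inl i)) (.inr (.inl j))
  have e12 := fun i => e (.inr (.inl i)) (.inr (.inr 0))
  have e10 := fun i => e (.inr (.inl i)) (.inl 0)
  have e22 := e (.inr (.inr 0)) (.inr (.inr 0))
  simp [Matrix.mul_apply, Fintype.sum_sum_type, herJ] at e00 e01 e02 e11 e12 e10 e22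
  simp [Matrix.trace, Fintype.sum_sum_type] at htr
  have hA : ∀ i j, (starRingEnd ℂ) (A i j) = -A j i := fun i j => eq_neg_of_add_eq_zero_left (e11 j i)
  have htr' : A.trace = (starRingEnd ℂ) (M (.inl 0) (.inl 0)) - M (.inl 0) (.inl 0) := by
    have : A.trace = ∑ i, M (.inr (.inl i)) (.inr (.inl i)) := rfl
    rw [this]
    linear_combination htr - e02
  have hz : M (.inl 0) (.inl 0) = (M (.inl 0) (.inl 0)).re - A.trace / 2 := by
    rw [htr', Complex.re_eq_add_conj]
    ring
  have hM : M = Upos m (fun j => M (.inl 0) (.inr (.inl j)))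
      + Yneg m (fun j => M (.inr (.inr 0)) (.inr (.inl j)))
      + cornerPos m (M (.inl 0) (.inr (.inr 0))) + cornerNeg m (M (.inr (.inr 0)) (.inl 0))
      + diagBlock m (M (.inl 0) (.inl 0)) A := by
    ext i j
    rcases i with i | i | i <;> rcases j with j | j | j <;>
      simp [Upos, Yneg, cornerPos, cornerNeg, diagBlock, A, Fin.fin_one_eq_zero]
    · exact eq_neg_of_add_eq_zero_right (e10 _)
    · exact eq_neg_of_add_eq_zero_right (e12 _)
    · exact eq_neg_of_add_eq_zero_right e02
  rw [hM, hz]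
  exact h'.add_mem (h'.add_mem (h'.add_mem (h'.add_mem (hpos _) (hneg _))
    (hcp _ (eq_neg_of_add_eq_zero_left e22))) (hcn _ (eq_neg_of_add_eq_zero_left e00)))
    (hdiag _ A hA)
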